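/- Define Q_α(ρ,σ) = tr((σ^{(1−α)/(2α)} ρ σ^{(1−α)/(2α)})^α) for positive definite matrices ρ, σ. For 1/2 ≤ α < 1, Q_α is jointly concave on pairs of positive definite matrices. -/

import Mathlib

open Matrix ComplexOrder

/-- Functional calculus for Hermitian matrices: apply `f` to the eigenvalues. -/
noncomputable def mfun {m : Type*} [Fintype m] [DecidableEq m] (f : ℝ → ℝ)
    (A : Matrix m m ℂ) : Matrix m m ℂ :=
  if hA : A.IsHermitian then
    (hA.eigenvectorUnitary : Matrix m m ℂ) *
      Matrix.diagonal (fun i => (f (hA.eigenvalues i) : ℂ)) *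
      (star (hA.eigenvectorUnitary : Matrix m m ℂ))
  else 0

/-- Real matrix power via the functional calculus. -/
noncomputable def mpow {m : Type*} [Fintype m] [DecidableEq m]
    (A : Matrix m m ℂ) (p : ℝ) : Matrix m m ℂ :=
  mfun (fun x => x ^ p) A

/-!
The parallel sum of the commuting operators `M ↦ A * M` and `M ↦ M * B` is a minimum of functions
linear in `(A, B)`, hence jointly concave, and `(A, B) ↦ tr (Kᴴ A ^ p K B ^ (1 - p))` is a weighted
integral of such parallel sums, scaled: this is Lieb's concavity theorem. The trace Young inequality
`tr (X Z ^ (1 - p)) - (1 - p) tr Z ≤ p tr (X ^ (1 / p))` with `X = Kᴴ A ^ p K`, sharp at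
`Z = X ^ (1 / p)`, exhibits `A ↦ tr ((Kᴴ A ^ p K) ^ (1 / p))` as a maximum over one variable of a
jointly concave function, which gives Epstein's concavity theorem. Finally, the reverse inequality
`tr (X ^ α) ≤ α tr (X W⁻¹) + (1 - α) tr (W ^ (α / (1 - α)))` with `X = S ρ S`,
`S = σ ^ ((1 - α) / (2 α))` and `W = (S K) (S K)ᴴ` exhibits `Q_α(ρ, σ)` as a minimum over `K` of a
linear function of `ρ` plus an Epstein function of `σ` with exponent `p = (1 - α) / α`, which is at
most `1` exactly when `1 / 2 ≤ α`.
-/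

section Concavity

variable {E F ι : Type*} [AddCommGroup E] [Module ℝ E] [AddCommGroup F] [Module ℝ F]

lemma concaveOn_of_isLeast {s : Set E} {I : Set ι} {φ : ι → E → ℝ} {f : E → ℝ}
    (hs : Convex ℝ s) (hφ : ∀ i ∈ I, ConcaveOn ℝ s (φ i))
    (hf : ∀ x ∈ s, IsLeast ((φ · x) '' I) (f x)) : ConcaveOn ℝ s f := by
  refine ⟨hs, fun x hx y hy a b ha hb hab => ?_⟩
  obtain ⟨i, hi, hmin⟩ := (hf _ (hs hx hy ha hb hab)).1
  calc a • f x + b • f y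
      ≤ a • φ i x + b • φ i y := by
        gcongr
        exacts [(hf x hx).2 ⟨i, hi, rfl⟩, (hf y hy).2 ⟨i, hi, rfl⟩]
    _ ≤ φ i (a • x + b • y) := (hφ i hi).2 hx hy ha hb hab
    _ = f (a • x + b • y) := hmin

lemma concaveOn_of_isGreatest {s : Set E} {t : Set F} {Φ : E × F → ℝ} {f : E → ℝ}
    (hs : Convex ℝ s) (hΦ : ConcaveOn ℝ (s ×ˢ t) Φ)
    (hf : ∀ x ∈ s, IsGreatest ((fun y => Φ (x, y)) '' t) (f x)) : ConcaveOn ℝ s f := by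
  refine ⟨hs, fun x hx x' hx' a b ha hb hab => ?_⟩
  obtain ⟨y, hy, hxy⟩ := (hf x hx).1
  obtain ⟨y', hy', hxy'⟩ := (hf x' hx').1
  rw [← hxy, ← hxy']
  refine (hΦ.2 (Set.mk_mem_prod hx hy) (Set.mk_mem_prod hx' hy') ha hb hab).trans ?_
  have hmem := hΦ.1 (Set.mk_mem_prod hx hy) (Set.mk_mem_prod hx' hy') ha hb hab
  exact (hf _ hmem.1).2 ⟨_, hmem.2, rfl⟩

lemma concaveOn_re_trace_mul_mul {m n 𝕜 : Type*} [Fintype m] [Fintype n] [RCLike 𝕜] {s : Set E}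
    (hs : Convex ℝ s) (ℓ : E →ₗ[ℝ] Matrix m m 𝕜) (L : Matrix n m 𝕜) (R : Matrix m n 𝕜) :
    ConcaveOn ℝ s fun x => RCLike.re (L * ℓ x * R).trace :=
  ⟨hs, fun x _ y _ a b _ _ _ => le_of_eq <| by
    simp only [map_add, map_smul, Matrix.mul_add, Matrix.add_mul, Matrix.mul_smul,
      Matrix.smul_mul, trace_add, trace_smul, RCLike.smul_re, smul_eq_mul]⟩

lemma convex_posDef {m 𝕜 : Type*} [RCLike 𝕜] : Convex ℝ {A : Matrix m m 𝕜 | A.PosDef} := by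
  rw [convex_iff_forall_pos]
  exact fun A hA B hB a b ha hb _ => (PosDef.smul hA ha).add (PosDef.smul hB hb)

end Concavity

section ScalarParallelSum

lemma isLeast_mul_norm_sq_add_mul_norm_sub_sq {V : Type*} [NormedAddCommGroup V]
    [NormedSpace ℝ V] {a b : ℝ} (ha : 0 ≤ a) (hb : 0 ≤ b) (k : V) :
    IsLeast (Set.range fun z : V => a * ‖z‖ ^ 2 + b * ‖k - z‖ ^ 2)
      (a * b / (a + b) * ‖k‖ ^ 2) := by
  obtain hab | hab := (add_nonneg ha hb).eq_or_lt'
  · obtain ⟨rfl, rfl⟩ : a = 0 ∧ b = 0 := ⟨by linarith, by linarith⟩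
    simp
  constructor
  · refine ⟨(b / (a + b)) • k, ?_⟩
    have hsub : k - (b / (a + b)) • k = (a / (a + b)) • k := by
      rw [eq_comm, ← sub_eq_zero]
      match_scalars
      field_simp
      ring
    simp only [hsub, norm_smul, Real.norm_eq_abs, mul_pow, sq_abs]
    field_simp
    ring
  · rintro _ ⟨z, rfl⟩
    have htri : ‖k‖ ≤ ‖z‖ + ‖k - z‖ := norm_le_norm_add_norm_sub' k z
    calc a * b / (a + b) * ‖k‖ ^ 2
        ≤ a * b / (a + b) * (‖z‖ + ‖k - z‖) ^ 2 := by gcongr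
      _ ≤ a * ‖z‖ ^ 2 + b * ‖k - z‖ ^ 2 := by
        rw [div_mul_eq_mul_div, div_le_iff₀ hab]
        linarith [sq_nonneg (a * ‖z‖ - b * ‖k - z‖)]

end ScalarParallelSum

section SpectralCalculus

open scoped MatrixOrder

variable {m n 𝕜 : Type*} [Fintype m] [DecidableEq m] [Fintype n] [DecidableEq n] [RCLike 𝕜]

lemma continuousOn_real_spectrum (f : ℝ → ℝ) (A : Matrix m m 𝕜) :
    ContinuousOn f (spectrum ℝ A) :=
  finite_real_spectrum.continuousOn f

lemma rpow_add_of_nonneg {A : Matrix m m 𝕜} (hA : 0 ≤ A) {x y : ℝ} (hx : 0 ≤ x) (hy : 0 ≤ y) :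
    A ^ (x + y) = A ^ x * A ^ y := by
  simp only [CFC.rpow_eq_cfc_real hA]
  rw [← cfc_mul _ _ A (continuousOn_real_spectrum _ A) (continuousOn_real_spectrum _ A)]
  exact cfc_congr fun z hz =>
    Real.rpow_add_of_nonneg (spectrum_nonneg_of_nonneg hA hz) hx hy

/-- The matrix of `K` with respect to the eigenbases of `A` and `B`, whose squared entries are the
weights turning trace functionals of `A` and `B` into sums over pairs of eigenvalues. -/
noncomputable def eigenbasisMatrix {A : Matrix m m 𝕜} {B : Matrix n n 𝕜} (hA : A.IsHermitian)
    (hB : B.IsHermitian) (K : Matrix m n 𝕜) : Matrix m n 𝕜 :=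
  star (hA.eigenvectorUnitary : Matrix m m 𝕜) * K * (hB.eigenvectorUnitary : Matrix n n 𝕜)

variable {A : Matrix m m 𝕜} {B : Matrix n n 𝕜}

lemma eigenbasisMatrix_sub (hA : A.IsHermitian) (hB : B.IsHermitian) (K L : Matrix m n 𝕜) :
    eigenbasisMatrix hA hB (K - L) = eigenbasisMatrix hA hB K - eigenbasisMatrix hA hB L := by
  simp only [eigenbasisMatrix, Matrix.mul_sub, Matrix.sub_mul]

lemma eigenbasisMatrix_surjective (hA : A.IsHermitian) (hB : B.IsHermitian) :
    Function.Surjective (eigenbasisMatrix hA hB) := by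
  intro N
  refine ⟨(hA.eigenvectorUnitary : Matrix m m 𝕜) * N *
    star (hB.eigenvectorUnitary : Matrix n n 𝕜), ?_⟩
  rw [eigenbasisMatrix, Matrix.mul_assoc _ N, ← Matrix.mul_assoc (star _), Matrix.mul_assoc,
    Matrix.mul_assoc N, Unitary.coe_star_mul_self, Unitary.coe_star_mul_self, Matrix.one_mul,
    Matrix.mul_one]

lemma re_trace_conjTranspose_mul_diagonal_mul_mul_diagonal (N : Matrix m n 𝕜) (d : m → ℝ)
    (e : n → ℝ) :
    RCLike.re (Nᴴ * diagonal (fun i => (d i : 𝕜)) * N * diagonal (fun j => (e j : 𝕜))).trace =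
      ∑ i, ∑ j, d i * e j * ‖N i j‖ ^ 2 := by
  rw [Finset.sum_comm, Matrix.trace, map_sum]
  refine Finset.sum_congr rfl fun j _ => ?_
  rw [diag_apply, mul_diagonal, Matrix.mul_apply, Finset.sum_mul, map_sum]
  refine Finset.sum_congr rfl fun i _ => ?_
  have hentry : star (N i j) * (d i : 𝕜) * N i j * (e j : 𝕜) =
      ((d i * e j * ‖N i j‖ ^ 2 : ℝ) : 𝕜) := by
    push_cast
    rw [← RCLike.conj_mul, starRingEnd_apply]
    ring
  rw [mul_diagonal, conjTranspose_apply, hentry, RCLike.ofReal_re]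

lemma re_trace_conjTranspose_mul_cfc_mul_mul_cfc (hA : A.IsHermitian) (hB : B.IsHermitian)
    (K : Matrix m n 𝕜) (f g : ℝ → ℝ) :
    RCLike.re (Kᴴ * cfc f A * K * cfc g B).trace =
      ∑ i, ∑ j, f (hA.eigenvalues i) * g (hB.eigenvalues j) *
        ‖eigenbasisMatrix hA hB K i j‖ ^ 2 := by
  rw [← re_trace_conjTranspose_mul_diagonal_mul_mul_diagonal, hA.cfc_eq, hB.cfc_eq,
    IsHermitian.cfc, IsHermitian.cfc, Unitary.conjStarAlgAut_apply, Unitary.conjStarAlgAut_apply,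
    ← Matrix.mul_assoc, trace_mul_comm]
  simp only [eigenbasisMatrix, conjTranspose_mul, star_eq_conjTranspose,
    conjTranspose_conjTranspose, Matrix.mul_assoc, Function.comp_def]

lemma re_trace_conjTranspose_mul_cfc_mul (hA : A.IsHermitian) (hB : B.IsHermitian)
    (K : Matrix m n 𝕜) (f : ℝ → ℝ) :
    RCLike.re (Kᴴ * cfc f A * K).trace =
      ∑ i, ∑ j, f (hA.eigenvalues i) * ‖eigenbasisMatrix hA hB K i j‖ ^ 2 := by
  have h := re_trace_conjTranspose_mul_cfc_mul_mul_cfc hA hB K f fun _ => 1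
  rw [cfc_const_one ℝ B hB.isSelfAdjoint, Matrix.mul_one] at h
  simpa only [mul_one] using h

lemma re_trace_mul_cfc_mul_conjTranspose (hA : A.IsHermitian) (hB : B.IsHermitian)
    (K : Matrix m n 𝕜) (g : ℝ → ℝ) :
    RCLike.re (K * cfc g B * Kᴴ).trace =
      ∑ i, ∑ j, g (hB.eigenvalues j) * ‖eigenbasisMatrix hA hB K i j‖ ^ 2 := by
  have h := re_trace_conjTranspose_mul_cfc_mul_mul_cfc hA hB K (fun _ => 1) g
  rw [cfc_const_one ℝ A hA.isSelfAdjoint, Matrix.mul_one, Matrix.mul_assoc, trace_mul_comm] at h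
  simpa only [one_mul] using h

lemma klein_inequality {A B : Matrix m m 𝕜} (hA : A.IsHermitian) (hB : B.IsHermitian)
    {a b c : ℝ} {f g h k : ℝ → ℝ}
    (hpos : ∀ i j, 0 ≤ a * f (hA.eigenvalues i) + b * g (hB.eigenvalues j) +
      c * (h (hA.eigenvalues i) * k (hB.eigenvalues j))) :
    0 ≤ a * RCLike.re (cfc f A).trace + b * RCLike.re (cfc g B).trace +
      c * RCLike.re (cfc h A * cfc k B).trace := by
  have hf := re_trace_conjTranspose_mul_cfc_mul hA hB 1 f
  have hg := re_trace_mul_cfc_mul_conjTranspose hA hB 1 g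
  have hhk := re_trace_conjTranspose_mul_cfc_mul_mul_cfc hA hB 1 h k
  simp only [conjTranspose_one, Matrix.one_mul, Matrix.mul_one] at hf hg hhk
  rw [hf, hg, hhk]
  simp only [Finset.mul_sum, ← Finset.sum_add_distrib]
  refine Finset.sum_nonneg fun i _ => Finset.sum_nonneg fun j _ => ?_
  have hterm := mul_nonneg (hpos i j) (sq_nonneg ‖eigenbasisMatrix hA hB 1 i j‖)
  linarith

lemma trace_cfc (hA : A.IsHermitian) (f : ℝ → ℝ) :
    (cfc f A).trace = ∑ i, (f (hA.eigenvalues i) : 𝕜) := by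
  rw [hA.cfc_eq, IsHermitian.cfc, Unitary.conjStarAlgAut_apply, trace_mul_cycle,
    Unitary.coe_star_mul_self, Matrix.one_mul, trace_diagonal]
  rfl

lemma trace_cfc_mul_conjTranspose_self (f : ℝ → ℝ) (K : Matrix m m 𝕜) :
    (cfc f (K * Kᴴ)).trace = (cfc f (Kᴴ * K)).trace := by
  have hleft := isHermitian_mul_conjTranspose_self K
  have hright := isHermitian_conjTranspose_mul_self K
  rw [trace_cfc hleft, trace_cfc hright,
    (hleft.eigenvalues_eq_eigenvalues_iff hright).2 (charpoly_mul_comm K Kᴴ)]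

end SpectralCalculus

section ParallelSum

open scoped MatrixOrder

variable {m n 𝕜 : Type*} [Fintype m] [Fintype n] [RCLike 𝕜] {A : Matrix m m 𝕜} {B : Matrix n n 𝕜}

/-- The quadratic form at `K` of the Anderson–Duffin parallel sum of the operators
`M ↦ A * M` and `M ↦ M * B`, in its variational form. -/
noncomputable def parallelSumForm (K : Matrix m n 𝕜) (A : Matrix m m 𝕜) (B : Matrix n n 𝕜) : ℝ :=
  ⨅ M : Matrix m n 𝕜, (RCLike.re (Mᴴ * A * M).trace + RCLike.re ((K - M) * B * (K - M)ᴴ).trace)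

lemma isLeast_parallelSumForm_cfc [DecidableEq m] [DecidableEq n] (hA : A.IsHermitian)
    (hB : B.IsHermitian) {f g : ℝ → ℝ} (hf : ∀ i, 0 ≤ f (hA.eigenvalues i))
    (hg : ∀ j, 0 ≤ g (hB.eigenvalues j)) (K : Matrix m n 𝕜) :
    IsLeast (Set.range fun M : Matrix m n 𝕜 =>
        RCLike.re (Mᴴ * cfc f A * M).trace + RCLike.re ((K - M) * cfc g B * (K - M)ᴴ).trace)
      (∑ i, ∑ j, f (hA.eigenvalues i) * g (hB.eigenvalues j) /
        (f (hA.eigenvalues i) + g (hB.eigenvalues j)) * ‖eigenbasisMatrix hA hB K i j‖ ^ 2) := by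
  have hmin i j := isLeast_mul_norm_sq_add_mul_norm_sub_sq (hf i) (hg j)
    (eigenbasisMatrix hA hB K i j)
  simp only [re_trace_conjTranspose_mul_cfc_mul hA hB, re_trace_mul_cfc_mul_conjTranspose hA hB,
    eigenbasisMatrix_sub, Matrix.sub_apply, ← Finset.sum_add_distrib]
  constructor
  · choose N hN using fun i j => (hmin i j).1
    obtain ⟨M, hM⟩ := eigenbasisMatrix_surjective hA hB (of N)
    refine ⟨M, ?_⟩
    simp only [hM, of_apply, ← hN]
  · rintro _ ⟨M, rfl⟩
    exact Finset.sum_le_sum fun i _ => Finset.sum_le_sum fun j _ => (hmin i j).2 ⟨_, rfl⟩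

lemma parallelSumForm_cfc [DecidableEq m] [DecidableEq n] (hA : A.IsHermitian)
    (hB : B.IsHermitian) {f g : ℝ → ℝ} (hf : ∀ i, 0 ≤ f (hA.eigenvalues i))
    (hg : ∀ j, 0 ≤ g (hB.eigenvalues j)) (K : Matrix m n 𝕜) :
    parallelSumForm K (cfc f A) (cfc g B) =
      ∑ i, ∑ j, f (hA.eigenvalues i) * g (hB.eigenvalues j) /
        (f (hA.eigenvalues i) + g (hB.eigenvalues j)) * ‖eigenbasisMatrix hA hB K i j‖ ^ 2 :=
  (isLeast_parallelSumForm_cfc hA hB hf hg K).csInf_eq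

lemma isLeast_parallelSumForm (hA : 0 ≤ A) (hB : 0 ≤ B) (K : Matrix m n 𝕜) :
    IsLeast (Set.range fun M : Matrix m n 𝕜 =>
        RCLike.re (Mᴴ * A * M).trace + RCLike.re ((K - M) * B * (K - M)ᴴ).trace)
      (parallelSumForm K A B) := by
  classical
  have hA' := nonneg_iff_posSemidef.1 hA
  have hB' := nonneg_iff_posSemidef.1 hB
  have h := isLeast_parallelSumForm_cfc hA'.isHermitian hB'.isHermitian (f := id) (g := id)
    hA'.eigenvalues_nonneg hB'.eigenvalues_nonneg K
  rw [cfc_id ℝ A hA'.isHermitian.isSelfAdjoint, cfc_id ℝ B hB'.isHermitian.isSelfAdjoint] at h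
  rwa [parallelSumForm, iInf, h.csInf_eq]

lemma parallelSumForm_smul_left [DecidableEq m] [DecidableEq n] (hA : A.PosSemidef)
    (hB : B.PosSemidef) {c : ℝ} (hc : 0 ≤ c) (K : Matrix m n 𝕜) :
    parallelSumForm K (c • A) B =
      ∑ i, ∑ j, c * hA.isHermitian.eigenvalues i * hB.isHermitian.eigenvalues j /
        (c * hA.isHermitian.eigenvalues i + hB.isHermitian.eigenvalues j) *
          ‖eigenbasisMatrix hA.isHermitian hB.isHermitian K i j‖ ^ 2 := by
  have h := parallelSumForm_cfc hA.isHermitian hB.isHermitian (f := (c * ·)) (g := id)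
    (fun i => mul_nonneg hc (hA.eigenvalues_nonneg i)) hB.eigenvalues_nonneg K
  rwa [cfc_const_mul_id c A hA.isHermitian.isSelfAdjoint,
    cfc_id ℝ B hB.isHermitian.isSelfAdjoint] at h

lemma concaveOn_parallelSumForm (K : Matrix m n 𝕜) :
    ConcaveOn ℝ (Set.Ici 0 ×ˢ Set.Ici 0) fun X : Matrix m m 𝕜 × Matrix n n 𝕜 =>
      parallelSumForm K X.1 X.2 := by
  have hconv : Convex ℝ (Set.Ici 0 ×ˢ Set.Ici 0 : Set (Matrix m m 𝕜 × Matrix n n 𝕜)) :=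
    (convex_Ici 0).prod (convex_Ici 0)
  refine concaveOn_of_isLeast (I := Set.univ) hconv (fun M _ => ?_)
    fun X hX => Set.image_univ ▸ isLeast_parallelSumForm hX.1 hX.2 K
  exact (concaveOn_re_trace_mul_mul hconv (LinearMap.fst ℝ _ _) Mᴴ M).add
    (concaveOn_re_trace_mul_mul hconv (LinearMap.snd ℝ _ _) (K - M) (K - M)ᴴ)

end ParallelSum

section TraceConcavity

open scoped MatrixOrder
open MeasureTheory

variable {m n 𝕜 : Type*} [Fintype m] [DecidableEq m] [Fintype n] [DecidableEq n] [RCLike 𝕜]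

lemma exists_measure_rpow_mul_rpow_eq_integral {p : ℝ} (hp : p ∈ Set.Ioo 0 1) :
    ∃ μ : Measure ℝ, ∀ a b : ℝ, 0 ≤ a → 0 ≤ b →
      IntegrableOn (fun t => t ^ (p - 1) * (t⁻¹ * a * b / (t⁻¹ * a + b))) (Set.Ioi 0) μ ∧
      a ^ p * b ^ (1 - p) =
        ∫ t in Set.Ioi 0, t ^ (p - 1) * (t⁻¹ * a * b / (t⁻¹ * a + b)) ∂μ := by
  obtain ⟨μ, hμ⟩ := Real.exists_measure_rpow_eq_integral_rpowIntegrand₀₁ hp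
  refine ⟨μ, fun a b ha hb => ?_⟩
  obtain rfl | hb := hb.eq_or_lt
  · simp [Real.zero_rpow (sub_pos.2 hp.2).ne']
  obtain ⟨hint, hpow⟩ := hμ (a / b) (div_nonneg ha hb.le)
  have hintegrand : Set.EqOn (fun t => b * Real.rpowIntegrand₀₁ p t (a / b))
      (fun t => t ^ (p - 1) * (t⁻¹ * a * b / (t⁻¹ * a + b))) (Set.Ioi 0) := by
    intro t (ht : 0 < t)
    have hden : a + t * b ≠ 0 := by positivity
    simp only [Real.rpowIntegrand₀₁_eq_pow_div hp ht.le (div_nonneg ha hb.le)]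
    field_simp [hden]
    ring
  refine ⟨IntegrableOn.congr_fun (hint.const_mul b) hintegrand measurableSet_Ioi, ?_⟩
  rw [← setIntegral_congr_fun measurableSet_Ioi hintegrand, integral_const_mul, ← hpow,
    Real.div_rpow ha hb.le, Real.rpow_sub hb, Real.rpow_one]
  ring

lemma exists_measure_re_trace_rpow_eq_integral_parallelSumForm (K : Matrix m n 𝕜) {p : ℝ}
    (hp : p ∈ Set.Ioo 0 1) :
    ∃ μ : Measure ℝ, ∀ (A : Matrix m m 𝕜) (B : Matrix n n 𝕜), 0 ≤ A → 0 ≤ B →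
      IntegrableOn (fun t => t ^ (p - 1) * parallelSumForm K (t⁻¹ • A) B) (Set.Ioi 0) μ ∧
      RCLike.re (Kᴴ * A ^ p * K * B ^ (1 - p)).trace =
        ∫ t in Set.Ioi 0, t ^ (p - 1) * parallelSumForm K (t⁻¹ • A) B ∂μ := by
  obtain ⟨μ, hμ⟩ := exists_measure_rpow_mul_rpow_eq_integral hp
  refine ⟨μ, fun A B hA hB => ?_⟩
  obtain ⟨hA', hB'⟩ := nonneg_iff_posSemidef.1 hA, nonneg_iff_posSemidef.1 hB
  set a := hA'.isHermitian.eigenvalues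
  set b := hB'.isHermitian.eigenvalues
  have hab i j := hμ (a i) (b j) (hA'.eigenvalues_nonneg i) (hB'.eigenvalues_nonneg j)
  have hspectral : Set.EqOn
      (fun t => ∑ i, ∑ j, t ^ (p - 1) * (t⁻¹ * a i * b j / (t⁻¹ * a i + b j)) *
        ‖eigenbasisMatrix hA'.isHermitian hB'.isHermitian K i j‖ ^ 2)
      (fun t => t ^ (p - 1) * parallelSumForm K (t⁻¹ • A) B) (Set.Ioi 0) := by
    intro t (ht : 0 < t)
    simp only [parallelSumForm_smul_left hA' hB' (inv_nonneg.2 ht.le), Finset.mul_sum, mul_assoc,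
      a, b]
  have hint i j := (hab i j).1.mul_const
    (‖eigenbasisMatrix hA'.isHermitian hB'.isHermitian K i j‖ ^ 2)
  have hint' i := integrable_finsetSum Finset.univ fun j _ => hint i j
  refine ⟨IntegrableOn.congr_fun (integrable_finsetSum _ fun i _ => hint' i) hspectral
    measurableSet_Ioi, ?_⟩
  rw [← setIntegral_congr_fun measurableSet_Ioi hspectral, CFC.rpow_eq_cfc_real hA,
    CFC.rpow_eq_cfc_real hB,
    re_trace_conjTranspose_mul_cfc_mul_mul_cfc hA'.isHermitian hB'.isHermitian,
    integral_finsetSum _ fun i _ => hint' i]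
  refine Finset.sum_congr rfl fun i _ => ?_
  rw [integral_finsetSum _ fun j _ => hint i j]
  exact Finset.sum_congr rfl fun j _ => by rw [integral_mul_const, ← (hab i j).2]

theorem lieb_concavity (K : Matrix m n 𝕜) {p : ℝ} (hp : p ∈ Set.Icc 0 1) :
    ConcaveOn ℝ (Set.Ici 0 ×ˢ Set.Ici 0) fun X : Matrix m m 𝕜 × Matrix n n 𝕜 =>
      RCLike.re (Kᴴ * X.1 ^ p * K * X.2 ^ (1 - p)).trace := by
  have hconv : Convex ℝ (Set.Ici 0 ×ˢ Set.Ici 0 : Set (Matrix m m 𝕜 × Matrix n n 𝕜)) :=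
    (convex_Ici 0).prod (convex_Ici 0)
  obtain rfl | hp0 := hp.1.eq_or_lt
  · refine (concaveOn_re_trace_mul_mul hconv (LinearMap.snd ℝ _ _) (Kᴴ * K) 1).congr fun X hX => ?_
    simp [CFC.rpow_zero X.1 (Set.mem_Ici.1 hX.1), CFC.rpow_one X.2 (Set.mem_Ici.1 hX.2)]
  obtain rfl | hp1 := hp.2.eq_or_lt
  · refine (concaveOn_re_trace_mul_mul hconv (LinearMap.fst ℝ _ _) Kᴴ K).congr fun X hX => ?_
    simp [CFC.rpow_one X.1 (Set.mem_Ici.1 hX.1), CFC.rpow_zero X.2 (Set.mem_Ici.1 hX.2)]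
  obtain ⟨μ, hμ⟩ := exists_measure_re_trace_rpow_eq_integral_parallelSumForm K ⟨hp0, hp1⟩
  refine (integral_concaveOn_of_integrand_ae hconv ?_ fun X hX => (hμ X.1 X.2 hX.1 hX.2).1).congr
    fun X hX => ((hμ X.1 X.2 hX.1 hX.2).2).symm
  filter_upwards [ae_restrict_mem measurableSet_Ioi] with t (ht : 0 < t)
  have hscale := (concaveOn_parallelSumForm K).comp_linearMap
    ((t⁻¹ • LinearMap.fst ℝ (Matrix m m 𝕜) (Matrix n n 𝕜)).prod (LinearMap.snd ℝ _ _))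
  refine (hscale.subset (fun X hX => ?_) hconv).smul (Real.rpow_nonneg ht.le _)
  exact ⟨smul_nonneg (inv_nonneg.2 ht.le) (Set.mem_Ici.1 hX.1), hX.2⟩

lemma isGreatest_re_trace_mul_rpow_sub {X : Matrix m m 𝕜} (hX : 0 ≤ X) {p : ℝ}
    (hp : p ∈ Set.Ioc 0 1) :
    IsGreatest ((fun Z => RCLike.re (X * Z ^ (1 - p)).trace - (1 - p) * RCLike.re Z.trace) ''
      Set.Ici 0) (p * RCLike.re (X ^ p⁻¹).trace) := by
  have hp' : 0 ≤ 1 - p := sub_nonneg.2 hp.2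
  constructor
  · refine ⟨X ^ p⁻¹, Set.mem_Ici.2 CFC.rpow_nonneg, ?_⟩
    have hexp : p⁻¹ = 1 + p⁻¹ * (1 - p) := by
      rw [mul_one_sub, inv_mul_cancel₀ hp.1.ne', add_sub_cancel]
    have hmul : X * (X ^ p⁻¹) ^ (1 - p) = X ^ p⁻¹ := by
      rw [CFC.rpow_rpow_of_exponent_nonneg X _ _ (inv_nonneg.2 hp.1.le) hp']
      conv_rhs => rw [hexp, rpow_add_of_nonneg hX zero_le_one
        (mul_nonneg (inv_nonneg.2 hp.1.le) hp'), CFC.rpow_one X]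
    simp only [hmul]
    ring
  · rintro _ ⟨Z, hZ : 0 ≤ Z, rfl⟩
    have hX' := nonneg_iff_posSemidef.1 hX
    have hZ' := nonneg_iff_posSemidef.1 hZ
    have hklein := klein_inequality hX'.isHermitian hZ'.isHermitian (a := p) (b := 1 - p) (c := -1)
      (f := (· ^ p⁻¹)) (g := id) (h := id) (k := (· ^ (1 - p))) fun i j => by
        have hx := hX'.eigenvalues_nonneg i
        have hyoung := Real.geom_mean_le_arith_mean2_weighted hp.1.le hp'
          (Real.rpow_nonneg hx p⁻¹) (hZ'.eigenvalues_nonneg j) (by ring)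
        rw [Real.rpow_inv_rpow hx hp.1.ne'] at hyoung
        simpa using hyoung
    rw [← CFC.rpow_eq_cfc_real hX, ← CFC.rpow_eq_cfc_real hZ,
      cfc_id ℝ X hX'.isHermitian.isSelfAdjoint, cfc_id ℝ Z hZ'.isHermitian.isSelfAdjoint] at hklein
    dsimp only
    linarith

theorem epstein_concavity (K : Matrix m n 𝕜) {p : ℝ} (hp : p ∈ Set.Ioc 0 1) :
    ConcaveOn ℝ (Set.Ici 0) fun A : Matrix m m 𝕜 => RCLike.re ((Kᴴ * A ^ p * K) ^ p⁻¹).trace := by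
  have hconv : Convex ℝ (Set.Ici 0 ×ˢ Set.Ici 0 : Set (Matrix m m 𝕜 × Matrix n n 𝕜)) :=
    (convex_Ici 0).prod (convex_Ici 0)
  have hscaled : ConcaveOn ℝ (Set.Ici 0) fun A : Matrix m m 𝕜 =>
      p * RCLike.re ((Kᴴ * A ^ p * K) ^ p⁻¹).trace := by
    refine concaveOn_of_isGreatest (convex_Ici 0) ((lieb_concavity K ⟨hp.1.le, hp.2⟩).add
      (concaveOn_re_trace_mul_mul hconv (LinearMap.snd ℝ _ _) ((p - 1) • (1 : Matrix n n 𝕜)) 1))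
      fun A _ => ?_
    have hX : 0 ≤ Kᴴ * A ^ p * K :=
      ((nonneg_iff_posSemidef.1 CFC.rpow_nonneg).conjTranspose_mul_mul_same K).nonneg
    convert isGreatest_re_trace_mul_rpow_sub hX hp using 3 with Z
    simp only [Pi.add_apply, LinearMap.snd_apply, Matrix.smul_mul, Matrix.one_mul, Matrix.mul_one,
      trace_smul, RCLike.smul_re]
    ring
  refine (hscaled.smul (inv_nonneg.2 hp.1.le)).congr fun A _ => ?_
  simp only [smul_eq_mul, inv_mul_cancel_left₀ hp.1.ne']

lemma inv_eq_rpow_neg_one {W : Matrix m m 𝕜} (hW : W.PosDef) : W⁻¹ = W ^ (-1 : ℝ) := by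
  rw [nonsing_inv_eq_ringInverse,
    CFC.inverse_eq_rpow_neg_one (isStrictlyPositive_iff_posDef.2 hW)]

lemma posDef_rpow {A : Matrix m m 𝕜} (hA : A.PosDef) (p : ℝ) : (A ^ p).PosDef :=
  isStrictlyPositive_iff_posDef.1 (IsStrictlyPositive.rpow A p (isStrictlyPositive_iff_posDef.2 hA))

lemma isLeast_re_trace_mul_inv_add {X : Matrix m m 𝕜} (hX : X.PosDef) {α : ℝ}
    (hα : α ∈ Set.Ioo 0 1) :
    IsLeast ((fun W => α * RCLike.re (X * W⁻¹).trace +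
      (1 - α) * RCLike.re (W ^ (α / (1 - α))).trace) '' {W | W.PosDef})
      (RCLike.re (X ^ α).trace) := by
  have hα' : 0 < 1 - α := sub_pos.2 hα.2
  have hX0 : 0 ≤ X := hX.posSemidef.nonneg
  constructor
  · have hY := posDef_rpow hX (1 - α)
    refine ⟨X ^ (1 - α), hY, ?_⟩
    have hmul : X * (X ^ (1 - α))⁻¹ = X ^ α := by
      have hadd := rpow_add_of_nonneg hX0 hα.1.le hα'.le
      rw [add_sub_cancel, CFC.rpow_one X] at hadd
      nth_rw 1 [hadd]
      exact mul_nonsing_inv_cancel_right _ _ ((isUnit_iff_isUnit_det _).1 hY.isUnit)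
    have hpow : (X ^ (1 - α)) ^ (α / (1 - α)) = X ^ α := by
      rw [CFC.rpow_rpow_of_exponent_nonneg X _ _ hα'.le (div_nonneg hα.1.le hα'.le),
        mul_div_cancel₀ _ hα'.ne']
    simp only [hmul, hpow]
    ring
  · rintro _ ⟨W, hW : W.PosDef, rfl⟩
    have hW0 : 0 ≤ W := hW.posSemidef.nonneg
    have hklein := klein_inequality hX.isHermitian hW.isHermitian (a := -1) (b := 1 - α) (c := α)
      (f := (· ^ α)) (g := (· ^ (α / (1 - α)))) (h := id) (k := (· ^ (-1 : ℝ))) fun i j => by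
        have hx := hX.eigenvalues_pos i
        have hw := hW.eigenvalues_pos j
        have hyoung := Real.geom_mean_le_arith_mean2_weighted hα.1.le hα'.le
          (mul_nonneg hx.le (Real.rpow_nonneg hw.le (-1))) (Real.rpow_nonneg hw.le (α / (1 - α)))
          (by ring)
        rw [Real.mul_rpow hx.le (Real.rpow_nonneg hw.le _), ← Real.rpow_mul hw.le,
          ← Real.rpow_mul hw.le, mul_assoc, ← Real.rpow_add hw, div_mul_cancel₀ _ hα'.ne'] at hyoung
        simp only [neg_one_mul, neg_add_cancel, Real.rpow_zero, mul_one, id_eq] at hyoung ⊢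
        linarith
    rw [← CFC.rpow_eq_cfc_real hX0, ← CFC.rpow_eq_cfc_real hW0, ← CFC.rpow_eq_cfc_real hW0,
      cfc_id ℝ X hX.isHermitian.isSelfAdjoint, ← inv_eq_rpow_neg_one hW] at hklein
    dsimp only
    linarith

/-- The quasi-entropy `Q_α(ρ, σ)` underlying the sandwiched Rényi divergence; its trace is real on
positive semidefinite pairs, and is recorded through its real part. -/
noncomputable def sandwichedQ (α : ℝ) (ρ σ : Matrix m m 𝕜) : ℝ :=
  RCLike.re ((σ ^ ((1 - α) / (2 * α)) * ρ * σ ^ ((1 - α) / (2 * α))) ^ α).trace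

lemma exists_isUnit_mul_mul_conjTranspose_eq {S W : Matrix m m 𝕜} (hS : IsUnit S) (hW : W.PosDef) :
    ∃ K, IsUnit K ∧ S * K * (S * K)ᴴ = W := by
  obtain ⟨R, hR, rfl⟩ := CStarAlgebra.isStrictlyPositive_iff_eq_mul_star_self.1
    (isStrictlyPositive_iff_posDef.2 hW)
  refine ⟨S⁻¹ * R, (isUnit_nonsing_inv_iff.2 hS).mul hR, ?_⟩
  rw [mul_nonsing_inv_cancel_left _ _ ((isUnit_iff_isUnit_det S).1 hS), star_eq_conjTranspose]

lemma trace_mul_mul_mul_inv {S K : Matrix m m 𝕜} (hS : IsUnit S) (hS' : S.IsHermitian)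
    (ρ : Matrix m m 𝕜) :
    (S * ρ * S * (S * K * (S * K)ᴴ)⁻¹).trace = (ρ * (K * Kᴴ)⁻¹).trace := by
  have hdet := (isUnit_iff_isUnit_det S).1 hS
  have hfactor : S * K * (S * K)ᴴ = S * (K * Kᴴ) * S := by
    rw [conjTranspose_mul, hS'.eq]
    simp only [Matrix.mul_assoc]
  rw [hfactor, Matrix.mul_inv_rev, Matrix.mul_inv_rev, ← Matrix.mul_assoc,
    mul_nonsing_inv_cancel_right _ _ hdet, ← Matrix.mul_assoc, trace_mul_comm, Matrix.mul_assoc,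
    nonsing_inv_mul_cancel_left _ _ hdet]

lemma trace_rpow_mul_mul_conjTranspose {S : Matrix m m 𝕜} (hS : S.IsHermitian) (K : Matrix m m 𝕜)
    (p : ℝ) : ((S * K * (S * K)ᴴ) ^ p).trace = ((Kᴴ * (S * S) * K) ^ p).trace := by
  have hfactor : Kᴴ * (S * S) * K = (S * K)ᴴ * (S * K) := by
    rw [conjTranspose_mul, hS.eq]
    simp only [Matrix.mul_assoc]
  rw [hfactor, CFC.rpow_eq_cfc_real (posSemidef_self_mul_conjTranspose _).nonneg,
    CFC.rpow_eq_cfc_real (posSemidef_conjTranspose_mul_self _).nonneg,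
    trace_cfc_mul_conjTranspose_self]

lemma isLeast_sandwichedQ {ρ σ : Matrix m m 𝕜} (hρ : ρ.PosDef) (hσ : σ.PosDef) {α : ℝ}
    (hα : α ∈ Set.Ioo 0 1) :
    IsLeast ((fun K => α * RCLike.re (ρ * (K * Kᴴ)⁻¹).trace + (1 - α) *
      RCLike.re ((Kᴴ * σ ^ ((1 - α) / α) * K) ^ ((1 - α) / α)⁻¹).trace) '' {K | IsUnit K})
      (sandwichedQ α ρ σ) := by
  set S := σ ^ ((1 - α) / (2 * α)) with hS
  have hSpos : S.PosDef := posDef_rpow hσ _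
  have hSS : σ ^ ((1 - α) / α) = S * S := by
    have hexp : 0 ≤ (1 - α) / (2 * α) :=
      div_nonneg (sub_nonneg.2 hα.2.le) (mul_nonneg zero_le_two hα.1.le)
    rw [hS, ← rpow_add_of_nonneg hσ.posSemidef.nonneg hexp hexp]
    congr 1
    ring
  have hX : (S * ρ * S).PosDef := by
    have h := (IsUnit.posDef_star_right_conjugate_iff hSpos.isUnit).2 hρ
    rwa [star_eq_conjTranspose, hSpos.isHermitian.eq] at h
  have hmin := isLeast_re_trace_mul_inv_add hX hα
  simp only [hSS, inv_div, ← trace_mul_mul_mul_inv hSpos.isUnit hSpos.isHermitian ρ,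
    ← trace_rpow_mul_mul_conjTranspose hSpos.isHermitian]
  constructor
  · obtain ⟨W, hW, hWmin⟩ := hmin.1
    obtain ⟨K, hK, rfl⟩ := exists_isUnit_mul_mul_conjTranspose_eq hSpos.isUnit hW
    exact ⟨K, hK, hWmin⟩
  · rintro _ ⟨K, hK, rfl⟩
    refine hmin.2 ⟨_, ?_, rfl⟩
    exact isStrictlyPositive_iff_posDef.1 (CStarAlgebra.isStrictlyPositive_iff_eq_mul_star_self.2
      ⟨S * K, hSpos.isUnit.mul hK, rfl⟩)

theorem Q_jointly_concave_general {α : ℝ} (hα : α ∈ Set.Ico (1 / 2) 1) :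
    ConcaveOn ℝ ({ρ | ρ.PosDef} ×ˢ {σ | σ.PosDef}) fun X : Matrix m m 𝕜 × Matrix m m 𝕜 =>
      sandwichedQ α X.1 X.2 := by
  have hα0 : 0 < α := one_half_pos.trans_le hα.1
  have hp : (1 - α) / α ∈ Set.Ioc (0 : ℝ) 1 :=
    ⟨div_pos (sub_pos.2 hα.2) hα0, (div_le_one hα0).2 (by linarith [hα.1])⟩
  have hconv : Convex ℝ ({ρ | ρ.PosDef} ×ˢ {σ | σ.PosDef} : Set (Matrix m m 𝕜 × Matrix m m 𝕜)) :=
    convex_posDef.prod convex_posDef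
  refine concaveOn_of_isLeast hconv (fun K _ => ?_)
    fun X hX => isLeast_sandwichedQ hX.1 hX.2 ⟨hα0, hα.2⟩
  have hρ := (concaveOn_re_trace_mul_mul hconv (LinearMap.fst ℝ _ _) 1 (K * Kᴴ)⁻¹).smul hα0.le
  have hσ := (((epstein_concavity K hp).comp_linearMap (LinearMap.snd ℝ _ _)).subset
    (fun X hX => Set.mem_Ici.2 (PosDef.posSemidef hX.2).nonneg) hconv).smul (sub_nonneg.2 hα.2.le)
  refine (hρ.add hσ).congr fun X _ => ?_
  simp only [Pi.add_apply, Function.comp_apply, LinearMap.fst_apply, LinearMap.snd_apply,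
    Matrix.one_mul, smul_eq_mul]

lemma mpow_eq_rpow {A : Matrix m m ℂ} (hA : A.PosSemidef) (p : ℝ) : mpow A p = A ^ p := by
  rw [CFC.rpow_eq_cfc_real hA.nonneg, hA.isHermitian.cfc_eq, mpow, mfun, dif_pos hA.isHermitian]
  rfl

lemma re_trace_mpow_eq_sandwichedQ {ρ σ : Matrix m m ℂ} (hρ : ρ.PosDef) (hσ : σ.PosDef) (α : ℝ) :
    (mpow (mpow σ ((1 - α) / (2 * α)) * ρ * mpow σ ((1 - α) / (2 * α))) α).trace.re =
      sandwichedQ α ρ σ := by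
  have hS := posDef_rpow hσ ((1 - α) / (2 * α))
  have hX := hρ.posSemidef.conjTranspose_mul_mul_same (σ ^ ((1 - α) / (2 * α)))
  rw [hS.isHermitian.eq] at hX
  rw [mpow_eq_rpow hσ.posSemidef, mpow_eq_rpow hX]
  rfl

end TraceConcavity

theorem Q_jointly_concave {n : ℕ} (α : ℝ) (hα0 : 1/2 ≤ α) (hα1 : α < 1)
    (ρ₀ ρ₁ σ₀ σ₁ : Matrix (Fin n) (Fin n) ℂ)
    (hρ₀ : ρ₀.PosDef) (hρ₁ : ρ₁.PosDef) (hσ₀ : σ₀.PosDef) (hσ₁ : σ₁.PosDef)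
    (t : ℝ) (ht0 : 0 ≤ t) (ht1 : t ≤ 1) :
    (1 - t) * (fun (ρ σ : Matrix (Fin n) (Fin n) ℂ) =>
      (mpow (mpow σ ((1 - α) / (2 * α)) * ρ * mpow σ ((1 - α) / (2 * α))) α).trace.re) ρ₀ σ₀ + t * (fun (ρ σ : Matrix (Fin n) (Fin n) ℂ) =>
      (mpow (mpow σ ((1 - α) / (2 * α)) * ρ * mpow σ ((1 - α) / (2 * α))) α).trace.re) ρ₁ σ₁ ≤
      (fun (ρ σ : Matrix (Fin n) (Fin n) ℂ) =>
      (mpow (mpow σ ((1 - α) / (2 * α)) * ρ * mpow σ ((1 - α) / (2 * α))) α).trace.re)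
        (((1 - t : ℝ) : ℂ) • ρ₀ + ((t : ℝ) : ℂ) • ρ₁)
        (((1 - t : ℝ) : ℂ) • σ₀ + ((t : ℝ) : ℂ) • σ₁) := by
  have ht := sub_nonneg.2 ht1
  have hsum := sub_add_cancel 1 t
  have hρ := convex_posDef hρ₀ hρ₁ ht ht0 hsum
  have hσ := convex_posDef hσ₀ hσ₁ ht ht0 hsum
  simp only [Complex.coe_smul]
  rw [re_trace_mpow_eq_sandwichedQ hρ₀ hσ₀, re_trace_mpow_eq_sandwichedQ hρ₁ hσ₁,
    re_trace_mpow_eq_sandwichedQ hρ hσ]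
  exact (Q_jointly_concave_general ⟨hα0, hα1⟩).2 (Set.mk_mem_prod hρ₀ hσ₀)
    (Set.mk_mem_prod hρ₁ hσ₁) ht ht0 hsum
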